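/- Let K be a field, q ∈ K nonzero with 2_q := q + q⁻¹ ≠ 0, ℏ ∈ K, and let A be a unital associative K-algebra containing elements b,h,c satisfying the SL(R_q,ℏ) relations and additionally q⁻¹bc + h²/2_q + q·cb = C·1 for a scalar C ∈ K. Let μ₀ ≠ μ₁ ∈ K be the two roots of μ² − q⁻¹ℏμ − C/2_q = 0 (i.e. μ₀ + μ₁ = q⁻¹ℏ and μ₀μ₁ = −C/2_q). Set F = [[q·h/2_q, b],[c, −q⁻¹·h/2_q]] and e_i = (μ_i − μ_j)⁻¹·(F − μ_j·I) for {i,j} = {0,1}. Then e₀² = e₀, e₁² = e₁, e₀e₁ = e₁e₀ = 0, and e₀ + e₁ = I. -/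

import Mathlib

/-!
The matrix `F` satisfies the quadratic Cayley–Hamilton identity
`F² - q⁻¹ℏ F - 2_q⁻¹ Cas = 0`, where the q-Casimir element `Cas` acts as a scalar matrix: the
off-diagonal entries are multiples of the relations of `h` with `b` and `c`, and the diagonal ones
are multiples of the relation of `b` with `c`. When `Cas` is the scalar `C`, this identity reads
`(F - μ₀)(F - μ₁) = 0`. The Lagrange basis polynomials of the nodes `μ₀ ≠ μ₁` sum to `1` and their
product is a multiple of `(X - μ₀)(X - μ₁)`, so their values at `F` are complementary orthogonal
idempotents.
-/

section LagrangeIdempotents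

open Polynomial Lagrange

variable {K B : Type*} [Field K] [Ring B] [Algebra K B] {x : B} {r s : K}

theorem aeval_basisDivisor (x : B) (r s : K) :
    aeval x (basisDivisor r s) = (r - s)⁻¹ • (x - s • (1 : B)) := by
  simp [basisDivisor, Algebra.smul_def]

theorem aeval_basisDivisor_add_swap (hrs : r ≠ s) :
    aeval x (basisDivisor r s) + aeval x (basisDivisor s r) = 1 := by
  rw [← map_add, basisDivisor_add_symm hrs, map_one]

theorem aeval_basisDivisor_mul_swap (hx : x * x = (r + s) • x - (r * s) • (1 : B)) :
    aeval x (basisDivisor r s) * aeval x (basisDivisor s r) = 0 := by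
  have factorization : (x - s • (1 : B)) * (x - r • (1 : B)) = 0 := by
    simp only [sub_mul, mul_sub, smul_mul_assoc, mul_smul_comm, one_mul, mul_one, hx]
    module
  rw [aeval_basisDivisor, aeval_basisDivisor, smul_mul_smul_comm, factorization, smul_zero]

theorem completeOrthogonalIdempotents_aeval_basisDivisor (hrs : r ≠ s)
    (hx : x * x = (r + s) • x - (r * s) • (1 : B)) :
    CompleteOrthogonalIdempotents ![aeval x (basisDivisor r s), aeval x (basisDivisor s r)] := by
  have hx_swap : x * x = (s + r) • x - (s * r) • (1 : B) := by
    rw [hx, add_comm r, mul_comm r]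
  exact CompleteOrthogonalIdempotents.pair_iff'ₛ.mpr ⟨aeval_basisDivisor_mul_swap hx,
    aeval_basisDivisor_mul_swap hx_swap, aeval_basisDivisor_add_swap hrs⟩

end LagrangeIdempotents

section QuantumHyperboloid

variable {K A : Type*} [Field K] [Ring A] [Algebra K A]

/-- The defining relations of `SL(R_q,ℏ)` on a triple `b`, `h`, `c` of elements of a `K`-algebra,
with `2_q` written out as `q + q⁻¹`. -/
structure SatisfiesSLRelations (q ℏ : K) (b h c : A) : Prop where
  h_b : q ^ 2 • (h * b) - b * h = ((q + q⁻¹) * ℏ) • b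
  c_h : q ^ 2 • (c * h) - h * c = ((q + q⁻¹) * ℏ) • c
  b_c : ((q + q⁻¹) * q) • (b * c - c * b) + (q ^ 2 - 1) • (h * h) = ((q + q⁻¹) * ℏ) • h

/-- The q-Casimir element, whose value is fixed to a scalar on the quantum hyperboloid. -/
def qCasimir (q : K) (b h c : A) : A :=
  q⁻¹ • (b * c) + (q + q⁻¹)⁻¹ • (h * h) + q • (c * b)

/-- The matrix `F` of generators of `SL(R_q,ℏ)`, normalized to have vanishing q-trace
`q⁻¹ F₀₀ + q F₁₁`. -/
def generatorMatrix (q : K) (b h c : A) : Matrix (Fin 2) (Fin 2) A :=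
  !![(q / (q + q⁻¹)) • h, b; c, -((q⁻¹ / (q + q⁻¹)) • h)]

variable {q ℏ C : K} {b h c : A}

theorem ne_zero_of_add_inv_ne_zero (h2q : q + q⁻¹ ≠ 0) : q ≠ 0 := by
  rintro rfl
  simp at h2q

theorem sq_add_one_ne_zero_of_add_inv_ne_zero (h2q : q + q⁻¹ ≠ 0) : q ^ 2 + 1 ≠ 0 := by
  have hq := ne_zero_of_add_inv_ne_zero h2q
  contrapose! h2q
  field_simp
  simpa using h2q

namespace SatisfiesSLRelations

theorem generatorMatrix_mul_self_apply_zero_zero (rel : SatisfiesSLRelations q ℏ b h c)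
    (h2q : q + q⁻¹ ≠ 0) :
    (generatorMatrix q b h c * generatorMatrix q b h c) 0 0 =
      (q⁻¹ * ℏ) • generatorMatrix q b h c 0 0 + (q + q⁻¹)⁻¹ • qCasimir q b h c := by
  have hq := ne_zero_of_add_inv_ne_zero h2q
  have hq2 := sq_add_one_ne_zero_of_add_inv_ne_zero h2q
  simp only [generatorMatrix, Matrix.mul_fin_two, Matrix.of_apply, Matrix.cons_val,
    qCasimir, smul_mul_smul_comm]
  linear_combination (norm := skip) ((q + q⁻¹)⁻¹ ^ 2) • rel.b_c
  match_scalars <;> field_simp <;> ring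

theorem generatorMatrix_mul_self_apply_zero_one (rel : SatisfiesSLRelations q ℏ b h c)
    (h2q : q + q⁻¹ ≠ 0) :
    (generatorMatrix q b h c * generatorMatrix q b h c) 0 1 =
      (q⁻¹ * ℏ) • generatorMatrix q b h c 0 1 := by
  have hq := ne_zero_of_add_inv_ne_zero h2q
  have hq2 := sq_add_one_ne_zero_of_add_inv_ne_zero h2q
  simp only [generatorMatrix, Matrix.mul_fin_two, Matrix.of_apply, Matrix.cons_val,
    mul_neg, smul_mul_assoc, mul_smul_comm]
  linear_combination (norm := skip) (q⁻¹ * (q + q⁻¹)⁻¹) • rel.h_b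
  match_scalars <;> field_simp <;> ring

theorem generatorMatrix_mul_self_apply_one_zero (rel : SatisfiesSLRelations q ℏ b h c)
    (h2q : q + q⁻¹ ≠ 0) :
    (generatorMatrix q b h c * generatorMatrix q b h c) 1 0 =
      (q⁻¹ * ℏ) • generatorMatrix q b h c 1 0 := by
  have hq := ne_zero_of_add_inv_ne_zero h2q
  have hq2 := sq_add_one_ne_zero_of_add_inv_ne_zero h2q
  simp only [generatorMatrix, Matrix.mul_fin_two, Matrix.of_apply, Matrix.cons_val,
    neg_mul, smul_mul_assoc, mul_smul_comm]
  linear_combination (norm := skip) (q⁻¹ * (q + q⁻¹)⁻¹) • rel.c_h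
  match_scalars <;> field_simp <;> ring

theorem generatorMatrix_mul_self_apply_one_one (rel : SatisfiesSLRelations q ℏ b h c)
    (h2q : q + q⁻¹ ≠ 0) :
    (generatorMatrix q b h c * generatorMatrix q b h c) 1 1 =
      (q⁻¹ * ℏ) • generatorMatrix q b h c 1 1 + (q + q⁻¹)⁻¹ • qCasimir q b h c := by
  have hq := ne_zero_of_add_inv_ne_zero h2q
  have hq2 := sq_add_one_ne_zero_of_add_inv_ne_zero h2q
  simp only [generatorMatrix, Matrix.mul_fin_two, Matrix.of_apply, Matrix.cons_val,
    qCasimir, neg_mul_neg, smul_mul_smul_comm]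
  linear_combination (norm := skip) (-(q⁻¹ ^ 2 * (q + q⁻¹)⁻¹ ^ 2)) • rel.b_c
  match_scalars <;> field_simp <;> ring

theorem generatorMatrix_mul_self (rel : SatisfiesSLRelations q ℏ b h c) (h2q : q + q⁻¹ ≠ 0) :
    generatorMatrix q b h c * generatorMatrix q b h c =
      (q⁻¹ * ℏ) • generatorMatrix q b h c +
        (q + q⁻¹)⁻¹ • Matrix.scalar (Fin 2) (qCasimir q b h c) := by
  ext i j
  fin_cases i <;> fin_cases j
  · simpa using rel.generatorMatrix_mul_self_apply_zero_zero h2q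
  · simpa using rel.generatorMatrix_mul_self_apply_zero_one h2q
  · simpa using rel.generatorMatrix_mul_self_apply_one_zero h2q
  · simpa using rel.generatorMatrix_mul_self_apply_one_one h2q

theorem generatorMatrix_mul_self_of_roots (rel : SatisfiesSLRelations q ℏ b h c)
    (h2q : q + q⁻¹ ≠ 0) (hC : qCasimir q b h c = algebraMap K A C)
    {r s : K} (hsum : r + s = q⁻¹ * ℏ) (hprod : r * s = -(C / (q + q⁻¹))) :
    generatorMatrix q b h c * generatorMatrix q b h c =
      (r + s) • generatorMatrix q b h c - (r * s) • (1 : Matrix (Fin 2) (Fin 2) A) := by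
  have scalar_casimir : Matrix.scalar (Fin 2) (qCasimir q b h c) = C • 1 := by
    rw [hC, ← Algebra.algebraMap_eq_smul_one]
    rfl
  rw [rel.generatorMatrix_mul_self h2q, scalar_casimir, hsum, hprod]
  module

end SatisfiesSLRelations

end QuantumHyperboloid

/-- On the quantum hyperboloid (the quotient of `SL(R_q,ℏ)` by the value `C` of the
q-Casimir element), the Cayley–Hamilton identity for the matrix `F` of generators
produces a pair of complementary orthogonal idempotents. -/
theorem stmt_7 (K : Type*) [Field K] (A : Type*) [Ring A] [Algebra K A]
    (q ℏ : K) (hq : q ≠ 0) (h2q : q + q⁻¹ ≠ 0) (b h c : A)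
    (r1 : q ^ 2 • (h * b) - b * h = ((q + q⁻¹) * ℏ) • b)
    (r2 : q ^ 2 • (c * h) - h * c = ((q + q⁻¹) * ℏ) • c)
    (r3 : ((q + q⁻¹) * q) • (b * c - c * b) + (q ^ 2 - 1) • (h * h) =
      ((q + q⁻¹) * ℏ) • h)
    (C : K)
    (hC : q⁻¹ • (b * c) + (q + q⁻¹)⁻¹ • (h * h) + q • (c * b) = algebraMap K A C)
    (μ₀ μ₁ : K) (hμ : μ₀ ≠ μ₁)
    (hsum : μ₀ + μ₁ = q⁻¹ * ℏ) (hprod : μ₀ * μ₁ = -(C / (q + q⁻¹)))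
    (F : Matrix (Fin 2) (Fin 2) A)
    (hF : F = !![(q / (q + q⁻¹)) • h, b; c, -((q⁻¹ / (q + q⁻¹)) • h)])
    (e₀ e₁ : Matrix (Fin 2) (Fin 2) A)
    (he₀ : e₀ = (μ₀ - μ₁)⁻¹ • (F - μ₁ • (1 : Matrix (Fin 2) (Fin 2) A)))
    (he₁ : e₁ = (μ₁ - μ₀)⁻¹ • (F - μ₀ • (1 : Matrix (Fin 2) (Fin 2) A))) :
    e₀ * e₀ = e₀ ∧ e₁ * e₁ = e₁ ∧ e₀ * e₁ = 0 ∧ e₁ * e₀ = 0 ∧ e₀ + e₁ = 1 := by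
  have rel : SatisfiesSLRelations q ℏ b h c := ⟨r1, r2, r3⟩
  have cayley_hamilton : F * F = (μ₀ + μ₁) • F - (μ₀ * μ₁) • 1 := by
    rw [hF]
    exact rel.generatorMatrix_mul_self_of_roots h2q hC hsum hprod
  have idempotents := completeOrthogonalIdempotents_aeval_basisDivisor hμ cayley_hamilton
  rw [← aeval_basisDivisor] at he₀ he₁
  rw [← he₀, ← he₁] at idempotents
  exact ⟨idempotents.idem 0, idempotents.idem 1, idempotents.ortho zero_ne_one,
    idempotents.ortho one_ne_zero, by simpa using idempotents.complete⟩
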